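/- arXiv:1601.03227 — 2 statements merged into one kernel-verified Lean document; each statement's English description precedes it below -/
import Mathlib

section
/- Let K be a finite field and f(X) ∈ K[X] a monic polynomial of degree n. Then f is a cyclic polynomial (i.e., there exists a cyclicity polynomial C(X) ∈ K[X] for f) if and only if in the factorisation f = ∏_{k=1}^d h_k into monic irreducible polynomials over K[X], all factors h_k have the same degree and are pairwise distinct. -/
open Polynomial

/-- `iterComp C m` is the `m`-fold composition `C^{(m)}` of `C` with itself,
with `C^{(0)} = X`. -/
noncomputable def iterComp {K : Type*} [CommRing K] (C : K[X]) : ℕ → K[X]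
  | 0 => X
  | m + 1 => (iterComp C m).comp C

/-- `f` is a cyclic polynomial with cyclicity polynomial `C`:
`f(C(X)) ≡ 0 mod f(X)`, `C^{(n)}(X) - X ≡ 0 mod f(X)` where `n = deg f`, and
`gcd(C^{(m)}(X) - X, f(X)) = 1` for `1 ≤ m < n`. -/
def IsCyclicPolyWith {K : Type*} [Field K] (f C : K[X]) : Prop :=
  f ∣ f.comp C ∧ f ∣ (iterComp C f.natDegree - X) ∧
    ∀ m : ℕ, 1 ≤ m → m < f.natDegree → IsCoprime (iterComp C m - X) f

/-!
A cyclicity polynomial acts on the roots of `f` in an extension field by `y ↦ C(y)`, and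
`IsCyclicPolyWith f C` says that every root has minimal period `n = deg f` under this action.
Hence the orbit of one root consists of `n` distinct roots, which is all of them: `f` is separable,
and any root is a polynomial in any other, so that all irreducible factors have the same degree.

Conversely, let `a₀, …, a_{d-1}` be roots of the distinct irreducible factors of `f`, each
generating the extension `L` of `K` of degree `e = n / d`, and let `φ` generate the Galois group.
The sequence `a₀, …, a_{d-1}, φ a₀, …, φ a_{d-1}, φ² a₀, …` runs through the roots with minimal
period `d e = n`. By the Chinese remainder theorem some `C ∈ K[X]` sends each of `a₀, …, a_{d-1}` to
its successor, and because `C` commutes with `φ` it shifts the whole sequence.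
-/

open Function IntermediateField

theorem aeval_iterComp {K A : Type*} [CommRing K] [Semiring A] [Algebra K A]
    (C : K[X]) (a : A) (m : ℕ) : aeval a (iterComp C m) = (aeval · C)^[m] a := by
  induction m generalizing a with
  | zero => exact aeval_X a
  | succ m ih => rw [iterComp, aeval_comp, ih, iterate_succ_apply]

theorem aeval_iterComp_sub_X_eq_zero_iff {K A : Type*} [CommRing K] [Ring A] [Algebra K A]
    {C : K[X]} {a : A} {m : ℕ} :
    aeval a (iterComp C m - X) = 0 ↔ IsPeriodicPt (aeval · C) m a := by
  rw [map_sub, aeval_X, aeval_iterComp, sub_eq_zero, IsPeriodicPt, IsFixedPt]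

theorem natDegree_minpoly_aeval_le {K L : Type*} [Field K] [Field L] [Algebra K L] {a : L}
    (ha : IsIntegral K a) (p : K[X]) :
    (minpoly K (aeval a p)).natDegree ≤ (minpoly K a).natDegree := by
  have := adjoin.finiteDimensional ha
  have hle : K⟮aeval a p⟯ ≤ K⟮a⟯ :=
    adjoin_simple_le_iff.2 (algebra_adjoin_le_adjoin K _ (aeval_mem_adjoin_singleton K a))
  have hp : IsIntegral K (aeval a p) :=
    adjoin_le_integralClosure ha (aeval_mem_adjoin_singleton K a)
  rw [← adjoin.finrank ha, ← adjoin.finrank hp]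
  exact finrank_le_of_le_right hle

theorem natDegree_minpoly_of_irreducible {K A : Type*} [Field K] [Ring A] [Nontrivial A]
    [Algebra K A] {p : K[X]} (hp : Irreducible p) {a : A} (ha : aeval a p = 0) :
    (minpoly K a).natDegree = p.natDegree := by
  rw [← minpoly.eq_of_irreducible hp ha,
    natDegree_mul_C (inv_ne_zero (leadingCoeff_ne_zero.2 hp.ne_zero))]

namespace IsCyclicPolyWith

section Orbit

variable {K L : Type*} [Field K] [Field L] [Algebra K L] {f C : K[X]} {a b : L}

theorem aeval_iterate_eq_zero (hC : IsCyclicPolyWith f C) (ha : aeval a f = 0) (k : ℕ) :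
    aeval ((aeval · C)^[k] a) f = 0 := by
  induction k with
  | zero => exact ha
  | succ k ih =>
    rw [iterate_succ_apply', ← aeval_comp]
    exact aeval_eq_zero_of_dvd_aeval_eq_zero hC.1 ih

theorem minimalPeriod_eq (hC : IsCyclicPolyWith f C) (hf : f ≠ 0) (ha : aeval a f = 0) :
    minimalPeriod (aeval · C) a = f.natDegree := by
  have hpos : 0 < f.natDegree := natDegree_pos_of_aeval_root hf ha (by simp)
  have hper : IsPeriodicPt (aeval · C) f.natDegree a :=
    aeval_iterComp_sub_X_eq_zero_iff.1 (aeval_eq_zero_of_dvd_aeval_eq_zero hC.2.1 ha)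
  refine (hper.minimalPeriod_le hpos).antisymm (le_of_not_gt fun hlt ↦ ?_)
  obtain ⟨u, v, huv⟩ := hC.2.2 _ (hper.minimalPeriod_pos hpos) hlt
  have hfix := aeval_iterComp_sub_X_eq_zero_iff.2 (isPeriodicPt_minimalPeriod (aeval · C) a)
  simpa [ha, hfix] using congrArg (aeval a) huv

theorem ncard_orbit_eq (hC : IsCyclicPolyWith f C) (hf : f ≠ 0) (ha : aeval a f = 0) :
    (((aeval · C)^[·] a) '' Set.Iio f.natDegree).ncard = f.natDegree := by
  rw [← hC.minimalPeriod_eq hf ha, iterate_injOn_Iio_minimalPeriod.ncard_image,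
    Set.ncard_Iio_nat]

theorem orbit_eq_rootSet (hC : IsCyclicPolyWith f C) (hf : f ≠ 0) (ha : aeval a f = 0) :
    ((aeval · C)^[·] a) '' Set.Iio f.natDegree = f.rootSet L := by
  refine Set.eq_of_subset_of_ncard_le ?_ ?_ (rootSet_finite f L)
  · rintro _ ⟨k, -, rfl⟩
    exact mem_rootSet.2 ⟨hf, hC.aeval_iterate_eq_zero ha k⟩
  · rw [hC.ncard_orbit_eq hf ha]
    exact ncard_rootSet_le f L

theorem exists_aeval_eq (hC : IsCyclicPolyWith f C) (hf : f ≠ 0) (ha : aeval a f = 0)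
    (hb : aeval b f = 0) : ∃ p : K[X], aeval a p = b := by
  obtain ⟨k, -, rfl⟩ := (hC.orbit_eq_rootSet hf ha).ge (mem_rootSet.2 ⟨hf, hb⟩)
  exact ⟨iterComp C k, aeval_iterComp C a k⟩

end Orbit

variable {K : Type*} [Field K] {f C g h : K[X]}

theorem separable (hC : IsCyclicPolyWith f C) (hf : f ≠ 0) : f.Separable := by
  rcases eq_or_ne f.degree 0 with hdeg | hdeg
  · simpa using separable_one.unit_mul (isUnit_iff_degree_eq_zero.2 hdeg)
  obtain ⟨a, ha⟩ := IsAlgClosed.exists_aeval_eq_zero (AlgebraicClosure K) f hdeg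
  have hsplits := IsAlgClosed.splits (f.map (algebraMap K (AlgebraicClosure K)))
  rw [← card_rootSet_eq_natDegree_iff_of_splits hf hsplits, ← Nat.card_eq_fintype_card,
    Nat.card_coe_set_eq, ← hC.orbit_eq_rootSet hf ha, hC.ncard_orbit_eq hf ha]

theorem natDegree_le_of_irreducible_dvd (hC : IsCyclicPolyWith f C) (hf : f ≠ 0)
    (hg : Irreducible g) (hgf : g ∣ f) (hh : Irreducible h) (hhf : h ∣ f) :
    h.natDegree ≤ g.natDegree := by
  obtain ⟨a, ha⟩ := IsAlgClosed.exists_aeval_eq_zero (AlgebraicClosure K) g hg.degree_pos.ne'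
  obtain ⟨b, hb⟩ := IsAlgClosed.exists_aeval_eq_zero (AlgebraicClosure K) h hh.degree_pos.ne'
  obtain ⟨p, rfl⟩ := hC.exists_aeval_eq hf (aeval_eq_zero_of_dvd_aeval_eq_zero hgf ha)
    (aeval_eq_zero_of_dvd_aeval_eq_zero hhf hb)
  rw [← natDegree_minpoly_of_irreducible hg ha, ← natDegree_minpoly_of_irreducible hh hb]
  exact natDegree_minpoly_aeval_le (Algebra.IsIntegral.isIntegral a) p

theorem natDegree_eq_of_irreducible_dvd (hC : IsCyclicPolyWith f C) (hf : f ≠ 0)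
    (hg : Irreducible g) (hgf : g ∣ f) (hh : Irreducible h) (hhf : h ∣ f) :
    g.natDegree = h.natDegree :=
  (hC.natDegree_le_of_irreducible_dvd hf hh hhf hg hgf).antisymm
    (hC.natDegree_le_of_irreducible_dvd hf hg hgf hh hhf)

end IsCyclicPolyWith

section MinpolyFamily

variable {K L ι : Type*} [Field K] [Field L] [Algebra K L] {a : ι → L}

theorem pairwise_isCoprime_minpoly (ha : ∀ i, IsIntegral K (a i))
    (hinj : Injective fun i ↦ minpoly K (a i)) :
    Pairwise (IsCoprime on fun i ↦ minpoly K (a i)) := by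
  intro i j hij
  refine (minpoly.irreducible (ha i)).coprime_iff_not_dvd.2 fun hdvd ↦ hij (hinj ?_)
  exact eq_of_monic_of_associated (minpoly.monic (ha i)) (minpoly.monic (ha j))
    ((minpoly.irreducible (ha i)).associated_of_dvd (minpoly.irreducible (ha j)) hdvd)

theorem exists_forall_aeval_eq [Finite ι] (ha : ∀ i, IsIntegral K (a i))
    (htop : ∀ i, K⟮a i⟯ = ⊤) (hinj : Injective fun i ↦ minpoly K (a i)) (b : ι → L) :
    ∃ C : K[X], ∀ i, aeval (a i) C = b i := by
  have hlocal (i : ι) : ∃ p : K[X], aeval (a i) p = b i := by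
    have hb : b i ∈ Algebra.adjoin K {a i} := by
      rw [(adjoin_simple_eq_top_iff_of_isAlgebraic (ha i).isAlgebraic).1 (htop i)]
      exact Algebra.mem_top
    rwa [Algebra.adjoin_singleton_eq_range_aeval] at hb
  choose p hp using hlocal
  obtain ⟨C, hC⟩ := Ideal.exists_forall_sub_mem_ideal
    (I := fun i ↦ Ideal.span {minpoly K (a i)})
    (fun i j hij ↦ (Ideal.isCoprime_span_singleton_iff _ _).2
      (pairwise_isCoprime_minpoly ha hinj hij)) p
  refine ⟨C, fun i ↦ ?_⟩
  rw [← hp i, ← sub_eq_zero, ← map_sub]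
  exact aeval_eq_zero_of_dvd_aeval_eq_zero (Ideal.mem_span_singleton.1 (hC i))
    (minpoly.aeval K (a i))

theorem isCyclicPolyWith_prod_minpoly [Fintype ι] {C : K[X]} (ha : ∀ i, IsIntegral K (a i))
    (hinj : Injective fun i ↦ minpoly K (a i))
    (hroot : ∀ i, aeval (aeval (a i) C) (∏ j, minpoly K (a j)) = 0)
    (hperiod : ∀ i, minimalPeriod (aeval · C) (a i) = (∏ j, minpoly K (a j)).natDegree) :
    IsCyclicPolyWith (∏ i, minpoly K (a i)) C := by
  have hdvd {g : K[X]} (hg : ∀ i, aeval (a i) g = 0) : ∏ i, minpoly K (a i) ∣ g :=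
    Fintype.prod_dvd_of_coprime (pairwise_isCoprime_minpoly ha hinj)
      fun i ↦ minpoly.dvd K (a i) (hg i)
  refine ⟨hdvd fun i ↦ ?_, hdvd fun i ↦ ?_, fun m hpos hlt ↦ IsCoprime.prod_right fun i _ ↦ ?_⟩
  · rw [aeval_comp, hroot i]
  · rw [aeval_iterComp_sub_X_eq_zero_iff, ← hperiod i]
    exact isPeriodicPt_minimalPeriod _ _
  · refine ((minpoly.irreducible (ha i)).coprime_iff_not_dvd.2 fun hdvd ↦ ?_).symm
    rw [minpoly.dvd_iff, aeval_iterComp_sub_X_eq_zero_iff] at hdvd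
    exact not_isPeriodicPt_of_pos_of_lt_minimalPeriod (Nat.pos_iff_ne_zero.1 hpos)
      (by rwa [hperiod i]) hdvd

end MinpolyFamily

section Interleave

variable {K L : Type*} [Field K] [Field L] [Algebra K L]

theorem pow_apply_eq_self_iff_orderOf_dvd (φ : Gal(L/K)) {b : L} (htop : K⟮b⟯ = ⊤) {j : ℕ} :
    (φ ^ j) b = b ↔ orderOf φ ∣ j := by
  rw [orderOf_dvd_iff_pow_eq_one]
  refine ⟨fun hfix ↦ AlgEquiv.ext fun y ↦ ?_, fun hone ↦ by rw [hone, AlgEquiv.one_apply]⟩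
  have hext : ((φ ^ j : Gal(L/K)) : L →ₐ[K] L).comp K⟮b⟯.val = K⟮b⟯.val :=
    adjoin_algHom_ext K fun _ hx ↦ by obtain rfl := hx; exact hfix
  exact DFunLike.congr_fun hext ⟨y, htop.ge mem_top⟩

/-- The sequence `a₀, …, a_{d-1}, φ a₀, …, φ a_{d-1}, φ² a₀, …`, which enumerates the conjugates of
all the `aᵢ` under the powers of `φ` so that advancing by `d` steps applies `φ`. The cyclicity
polynomial is built to shift it. -/
def interleave (φ : Gal(L/K)) {d : ℕ} [NeZero d] (a : Fin d → L) (k : ℕ) : L :=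
  (φ ^ (k / d)) (a (Fin.ofNat d k))

variable (φ : Gal(L/K)) {d : ℕ} [NeZero d] (a : Fin d → L)

theorem interleave_val (i : Fin d) : interleave φ a i = a i := by
  simp [interleave, Nat.div_eq_of_lt i.isLt]

theorem interleave_add_mul (k j : ℕ) :
    interleave φ a (k + d * j) = (φ ^ j) (interleave φ a k) := by
  have hmod : Fin.ofNat d (k + d * j) = Fin.ofNat d k := Fin.ext (by simp)
  rw [interleave, interleave, hmod, Nat.add_mul_div_left _ _ (Nat.pos_of_neZero d), add_comm,
    pow_add, AlgEquiv.mul_apply]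

theorem minpoly_interleave (k : ℕ) :
    minpoly K (interleave φ a k) = minpoly K (a (Fin.ofNat d k)) :=
  minpoly.algEquiv_eq _ _

theorem aeval_interleave_prod_minpoly (k : ℕ) :
    aeval (interleave φ a k) (∏ i, minpoly K (a i)) = 0 := by
  refine aeval_eq_zero_of_dvd_aeval_eq_zero
    (Finset.dvd_prod_of_mem _ (Finset.mem_univ (Fin.ofNat d k))) ?_
  rw [← minpoly_interleave φ, minpoly.aeval]

variable {a}

theorem interleave_add_eq_self_iff (htop : ∀ i, K⟮a i⟯ = ⊤)
    (hinj : Injective fun i ↦ minpoly K (a i)) (i : Fin d) (m : ℕ) :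
    interleave φ a (i + m) = a i ↔ d * orderOf φ ∣ m := by
  constructor
  · intro heq
    have hmod : i + m ≡ i + 0 [MOD d] := by
      have hmin := congrArg (minpoly K) (heq.trans (interleave_val φ a i).symm)
      rw [minpoly_interleave, minpoly_interleave] at hmin
      exact congrArg Fin.val (hinj hmin)
    obtain ⟨j, rfl⟩ := Nat.modEq_zero_iff_dvd.1 hmod.add_left_cancel'
    rw [interleave_add_mul, interleave_val,
      pow_apply_eq_self_iff_orderOf_dvd φ (htop i)] at heq
    exact mul_dvd_mul_left d heq
  · rintro ⟨j, rfl⟩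
    rw [mul_assoc, interleave_add_mul, interleave_val,
      pow_apply_eq_self_iff_orderOf_dvd φ (htop i)]
    exact dvd_mul_right _ _

variable {φ} {C : K[X]}

theorem aeval_interleave (hC : ∀ i : Fin d, aeval (a i) C = interleave φ a (i + 1)) (k : ℕ) :
    aeval (interleave φ a k) C = interleave φ a (k + 1) := by
  have hk : k = (Fin.ofNat d k : ℕ) + d * (k / d) := by simp [Nat.mod_add_div]
  rw [hk, add_right_comm, interleave_add_mul, interleave_add_mul, interleave_val, ← hC,
    aeval_algEquiv, AlgHom.comp_apply, AlgEquiv.coe_toAlgHom]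

theorem iterate_aeval_interleave (hC : ∀ i : Fin d, aeval (a i) C = interleave φ a (i + 1))
    (k m : ℕ) : (aeval · C)^[m] (interleave φ a k) = interleave φ a (k + m) := by
  induction m with
  | zero => rfl
  | succ m ih => rw [iterate_succ_apply', ih, aeval_interleave hC, add_assoc]

theorem minimalPeriod_aeval_eq (htop : ∀ i, K⟮a i⟯ = ⊤)
    (hinj : Injective fun i ↦ minpoly K (a i))
    (hC : ∀ i : Fin d, aeval (a i) C = interleave φ a (i + 1)) (i : Fin d) :
    minimalPeriod (aeval · C) (a i) = d * orderOf φ := by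
  refine Nat.dvd_right_iff_eq.1 fun m ↦ ?_
  rw [← isPeriodicPt_iff_minimalPeriod_dvd, ← interleave_add_eq_self_iff φ htop hinj i,
    ← iterate_aeval_interleave hC, interleave_val, IsPeriodicPt, IsFixedPt]

end Interleave

theorem exists_isCyclicPolyWith_prod_minpoly {K L ι : Type*} [Field K] [Field L] [Algebra K L]
    [FiniteDimensional K L] [IsGalois K L] [IsCyclic Gal(L/K)] [Fintype ι] [Nonempty ι]
    {a : ι → L} (htop : ∀ i, K⟮a i⟯ = ⊤) (hinj : Injective fun i ↦ minpoly K (a i)) :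
    ∃ C : K[X], IsCyclicPolyWith (∏ i, minpoly K (a i)) C := by
  have ha (i : ι) : IsIntegral K (a i) := IsIntegral.of_finite K (a i)
  obtain ⟨φ, hφ⟩ := IsCyclic.exists_ofOrder_eq_natCard (α := Gal(L/K))
  have hdegree : (∏ i, minpoly K (a i)).natDegree = Fintype.card ι * orderOf φ := by
    simp_rw [natDegree_prod_of_monic _ _ fun i _ ↦ minpoly.monic (ha i), hφ,
      IsGalois.card_aut_eq_finrank,
      (Field.primitive_element_iff_minpoly_natDegree_eq K _).1 (htop _), Finset.sum_const,
      Finset.card_univ, smul_eq_mul]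
  let e := (Fintype.equivFin ι).symm
  have hprod : ∏ k, minpoly K ((a ∘ e) k) = ∏ i, minpoly K (a i) :=
    e.prod_comp fun i ↦ minpoly K (a i)
  obtain ⟨C, hC⟩ := exists_forall_aeval_eq (a := a ∘ e) (fun k ↦ ha (e k)) (fun k ↦ htop (e k))
    (hinj.comp e.injective) fun k ↦ interleave φ (a ∘ e) (k + 1)
  rw [← hprod] at hdegree ⊢
  refine ⟨C, isCyclicPolyWith_prod_minpoly (fun k ↦ ha (e k)) (hinj.comp e.injective)
    (fun k ↦ ?_) fun k ↦ ?_⟩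
  · rw [hC, aeval_interleave_prod_minpoly]
  · exact (minimalPeriod_aeval_eq (fun k ↦ htop (e k)) (hinj.comp e.injective) hC k).trans
      hdegree.symm

theorem exists_aeval_eq_zero_of_natDegree_dvd_finrank {K L : Type*} [Field K] [Field L]
    [Algebra K L] [Finite L] {p : K[X]} (hp : Irreducible p)
    (hdvd : p.natDegree ∣ Module.finrank K L) : ∃ a : L, aeval a p = 0 := by
  have : Fact (Irreducible p) := ⟨hp⟩
  obtain ⟨ψ⟩ := FiniteField.nonempty_algHom_of_finrank_dvd (F := K) (K := AdjoinRoot p) (L := L)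
    (finrank_quotient_span_eq_natDegree.dvd.trans hdvd)
  exact ⟨ψ (AdjoinRoot.root p), by
    rw [aeval_algHom_apply, AdjoinRoot.aeval_eq, AdjoinRoot.mk_self, map_zero]⟩

theorem exists_minpoly_eq_of_natDegree_eq_finrank {K L : Type*} [Field K] [Field L]
    [Algebra K L] [Finite L] {p : K[X]} (hmonic : p.Monic) (hp : Irreducible p)
    (hdegree : p.natDegree = Module.finrank K L) : ∃ a : L, minpoly K a = p ∧ K⟮a⟯ = ⊤ := by
  obtain ⟨a, ha⟩ := exists_aeval_eq_zero_of_natDegree_dvd_finrank (L := L) hp hdegree.dvd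
  have hmin : minpoly K a = p := (minpoly.eq_of_irreducible_of_monic hp ha hmonic).symm
  exact ⟨a, hmin, (Field.primitive_element_iff_minpoly_natDegree_eq K a).2 (hmin ▸ hdegree)⟩

theorem isCyclicPolyWith_of_isUnit {K : Type*} [Field K] {f : K[X]} (hf : IsUnit f) (C : K[X]) :
    IsCyclicPolyWith f C :=
  ⟨hf.dvd, hf.dvd, fun _ _ _ ↦ isCoprime_one_right.of_isCoprime_of_dvd_right hf.dvd⟩

open UniqueFactorizationMonoid in
theorem prod_primeFactors_eq_self {K : Type*} [Field K] [DecidableEq K] {f : K[X]}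
    (hmonic : f.Monic) (hf : Squarefree f) : ∏ p ∈ primeFactors f, p = f := by
  refine eq_of_monic_of_associated (monic_prod_of_monic _ _ fun p hp ↦ ?_) hmonic
    (radical_associated hf.isRadical hmonic.ne_zero)
  exact ((Polynomial.mem_normalizedFactors_iff hmonic.ne_zero).1 (mem_primeFactors.1 hp)).2.1

open UniqueFactorizationMonoid in
theorem exists_isCyclicPolyWith_of_squarefree {K : Type*} [Field K] [Finite K] {f : K[X]}
    (hmonic : f.Monic) (hf : Squarefree f)
    (hdegree : ∀ g h : K[X], g.Monic → h.Monic → Irreducible g → Irreducible h →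
      g ∣ f → h ∣ f → g.natDegree = h.natDegree) :
    ∃ C : K[X], IsCyclicPolyWith f C := by
  classical
  rcases (primeFactors f).eq_empty_or_nonempty with hempty | ⟨g, hg⟩
  · exact ⟨0, isCyclicPolyWith_of_isUnit ((primeFactors_eq_empty_iff hf.ne_zero).1 hempty) 0⟩
  have hfactor (p : primeFactors f) : Irreducible (p : K[X]) ∧ (p : K[X]).Monic ∧ (p : K[X]) ∣ f :=
    (Polynomial.mem_normalizedFactors_iff hf.ne_zero).1 (mem_primeFactors.1 p.2)
  obtain ⟨hg_irr, hg_monic, hg_dvd⟩ := hfactor ⟨g, hg⟩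
  have : Fact (Irreducible g) := ⟨hg_irr⟩
  have : FiniteDimensional K (AdjoinRoot g) := hg_monic.finite_adjoinRoot
  have : Finite (AdjoinRoot g) := Module.finite_of_finite K
  have hroot (p : primeFactors f) : ∃ a : AdjoinRoot g, minpoly K a = p ∧ K⟮a⟯ = ⊤ := by
    obtain ⟨hp_irr, hp_monic, hp_dvd⟩ := hfactor p
    exact exists_minpoly_eq_of_natDegree_eq_finrank hp_monic hp_irr
      ((hdegree p g hp_monic hg_monic hp_irr hg_irr hp_dvd hg_dvd).trans
        finrank_quotient_span_eq_natDegree.symm)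
  choose a hmin htop using hroot
  have : Nonempty (primeFactors f) := ⟨⟨g, hg⟩⟩
  obtain ⟨C, hC⟩ := exists_isCyclicPolyWith_prod_minpoly htop
    (by simpa only [hmin] using Subtype.val_injective)
  refine ⟨C, ?_⟩
  simpa only [hmin, Finset.prod_coe_sort _ fun p ↦ p, prod_primeFactors_eq_self hmonic hf] using hC

theorem stmt_3 {K : Type*} [Field K] [Fintype K] (f : K[X]) (n : ℕ)
    (hmonic : f.Monic) (hn : f.natDegree = n) :
    (∃ C : K[X], IsCyclicPolyWith f C) ↔
      (Squarefree f ∧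
        ∀ g h : K[X], g.Monic → h.Monic → Irreducible g → Irreducible h →
          g ∣ f → h ∣ f → g.natDegree = h.natDegree) := by
  constructor
  · rintro ⟨C, hC⟩
    have hf := hmonic.ne_zero
    exact ⟨(hC.separable hf).squarefree, fun g h _ _ hg hh hgf hhf ↦
      hC.natDegree_eq_of_irreducible_dvd hf hg hgf hh hhf⟩
  · rintro ⟨hsquarefree, hdegree⟩
    exact exists_isCyclicPolyWith_of_squarefree hmonic hsquarefree hdegree
end

section
/- Let A be a polynomially cyclic algebra over a finite field K with Gal(A/K) = ⟨ν⟩ of order n, let ρ_n be a primitive n-th root of unity over K, and let χ, χ': Gal(A/K) → K[ρ_n]^* be multiplicative characters. Then for every α ∈ A such that (χ·χ', α) is invertible in A_{ρ_n}, the quotient (χ, α)·(χ', α)/(χ·χ', α) lies in K[ρ_n] (viewed inside A_{ρ_n}). -/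
open Polynomial

/-!
Extend `ν` to the `L`-linear automorphism `σ` of `L ⊗ A`. Shifting the summation index gives
`χ(ν) • σ (χ, α) = (χ, α)`, so `(χ, α) (χ', α)` and `(χχ', α)` are scaled by `σ` in the same way
and their quotient `t` is fixed by `σ`. To see that `t` lies in `L`, write `t = p(θ)`
with `p ∈ L[X]` of degree less than `n`, where `θ` is the class of `X` in `A`. Then `p - t`
vanishes at the `n` points `σ ^ i θ`, whose differences are units by the gcd condition on `C`, so
`p - t = 0` and `t` is the constant coefficient of `p`.
-/

open scoped TensorProduct

section FixedPoints

variable {R S : Type*} [CommRing R] [CommRing S]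

lemma eq_zero_of_natDegree_lt_card_of_isUnit_sub {ι : Type*} {s : Finset ι} {r : ι → S} {p : S[X]}
    (hr : (s : Set ι).Pairwise fun i j => IsUnit (r i - r j))
    (hp : ∀ i ∈ s, p.eval (r i) = 0) (hdeg : p.natDegree < s.card) : p = 0 := by
  nontriviality S
  by_contra hp0
  have hdvd : ∏ i ∈ s, (X - C (r i)) ∣ p :=
    Finset.prod_dvd_of_coprime
      (fun i hi j hj hij => isCoprime_X_sub_C_of_isUnit_sub (hr hi hj hij))
      fun i hi => dvd_iff_isRoot.2 (hp i hi)
  have hmonic : (∏ i ∈ s, (X - C (r i))).Monic := monic_prod_X_sub_C r s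
  refine hmonic.not_dvd_of_natDegree_lt hp0 ?_ hdvd
  rwa [natDegree_finsetProd_X_sub_C_eq_card]

variable [Algebra R S]

lemma isUnit_pow_apply_sub_pow_apply {σ : S ≃ₐ[R] S} {x : S} {n : ℕ}
    (hx : ∀ m, 1 ≤ m → m < n → IsUnit ((σ ^ m) x - x)) :
    (Finset.range n : Set ℕ).Pairwise fun i j => IsUnit ((σ ^ i) x - (σ ^ j) x) := by
  have isUnit_of_lt {i j : ℕ} (hij : i < j) (hj : j < n) : IsUnit ((σ ^ j) x - (σ ^ i) x) := by
    have h := (hx (j - i) (by lia) (by lia)).map (σ ^ i)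
    rwa [map_sub, ← AlgEquiv.mul_apply, ← pow_add, Nat.add_sub_cancel' hij.le] at h
  intro i hi j hj hij
  rw [Finset.mem_coe, Finset.mem_range] at hi hj
  rcases hij.lt_or_gt with hlt | hgt
  · exact IsUnit.sub_iff.1 (isUnit_of_lt hlt hj)
  · exact isUnit_of_lt hgt hi

lemma exists_algebraMap_eq_of_apply_eq_self (pb : PowerBasis R S) {σ : S ≃ₐ[R] S}
    (hσ : ∀ m, 1 ≤ m → m < pb.dim → IsUnit ((σ ^ m) pb.gen - pb.gen)) {t : S} (ht : σ t = t) :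
    ∃ r : R, algebraMap R S r = t := by
  nontriviality S
  obtain ⟨p, hdeg, hp⟩ := pb.exists_eq_aeval t
  have eval_orbit (i : ℕ) : aeval ((σ ^ i) pb.gen) p = t := by
    rw [aeval_algHom_apply, ← hp, AlgEquiv.coe_pow, Function.iterate_fixed ht]
  have map_eq_C : p.map (algebraMap R S) - C t = 0 := by
    refine eq_zero_of_natDegree_lt_card_of_isUnit_sub (isUnit_pow_apply_sub_pow_apply hσ)
      (fun i _ => ?_) ?_
    · rw [eval_sub, eval_map_algebraMap, eval_orbit, eval_C, sub_self]
    · rw [natDegree_sub_C, Finset.card_range]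
      exact natDegree_map_le.trans_lt hdeg
  refine ⟨p.coeff 0, ?_⟩
  rw [← coeff_map, sub_eq_zero.1 map_eq_C, coeff_C_zero]

lemma exists_apply_eq_self_and_eq_mul {F : Type*} [FunLike F S S] [MulHomClass F S S] {σ : F}
    {c : R} {u w : S}
    (hu : c • σ u = u) (hw : c • σ w = w) (hunit : IsUnit w) :
    ∃ t, σ t = t ∧ u = t * w := by
  obtain ⟨t, rfl⟩ := hunit.dvd (a := u)
  refine ⟨t, hunit.mul_left_cancel ?_, mul_comm w t⟩
  calc w * σ t = c • σ (w * t) := by rw [map_mul, ← smul_mul_assoc, hw]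
    _ = w * t := hu

end FixedPoints

section BaseChange

variable {K A : Type*} [CommRing K] [CommRing A] [Algebra K A]
variable (L : Type*) [CommRing L] [Algebra K L]

/-- The power basis of `L ⊗ A` over `L` obtained from one of `A` over `K`, with generator `1 ⊗ θ`
where `θ` generates `A`. -/
@[simps]
noncomputable def powerBasisBaseChange (pb : PowerBasis K A) : PowerBasis L (L ⊗[K] A) where
  gen := 1 ⊗ₜ pb.gen
  dim := pb.dim
  basis := Algebra.TensorProduct.basis L pb.basis
  basis_eq_pow i := by simp

/-- Extension of scalars of automorphisms, `ν ↦ id ⊗ ν`; it carries the Galois action on `A` over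
to `A_ρ = L ⊗ A`. -/
noncomputable def autBaseChange : (A ≃ₐ[K] A) →* (L ⊗[K] A ≃ₐ[L] L ⊗[K] A) where
  toFun ν := Algebra.TensorProduct.congr AlgEquiv.refl ν
  map_one' := Algebra.TensorProduct.congr_refl
  map_mul' μ ν := Algebra.TensorProduct.congr_trans .refl .refl ν μ

variable {L}

@[simp]
lemma autBaseChange_tmul (ν : A ≃ₐ[K] A) (l : L) (a : A) :
    autBaseChange L ν (l ⊗ₜ a) = l ⊗ₜ ν a :=
  Algebra.TensorProduct.congr_apply ..

lemma exists_eq_tmul_one_of_autBaseChange_eq_self (pb : PowerBasis K A) {ν : A ≃ₐ[K] A}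
    (hν : ∀ m, 1 ≤ m → m < pb.dim → IsUnit ((ν ^ m) pb.gen - pb.gen))
    {t : L ⊗[K] A} (ht : autBaseChange L ν t = t) : ∃ l : L, l ⊗ₜ 1 = t := by
  refine exists_algebraMap_eq_of_apply_eq_self (powerBasisBaseChange L pb) (fun m h1 hm => ?_) ht
  rw [← map_pow, powerBasisBaseChange_gen, autBaseChange_tmul, ← TensorProduct.tmul_sub]
  exact (hν m h1 hm).map (Algebra.TensorProduct.includeRight : A →ₐ[K] L ⊗[K] A)

/-- The Lagrange resolvent `(χ, a) = ∑ χ(ν) ^ i ν ^ i (a)`, `1 ≤ i ≤ n`, as a function of the value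
`c = χ(ν)` of the character on the generator. -/
noncomputable def lagrangeResolvent (ν : A ≃ₐ[K] A) (n : ℕ) (c : L) (a : A) : L ⊗[K] A :=
  ∑ i ∈ Finset.range n, (c ^ (i + 1)) ⊗ₜ[K] ((ν ^ (i + 1)) a)

lemma smul_autBaseChange_lagrangeResolvent {ν : A ≃ₐ[K] A} {n : ℕ} (hν : ν ^ n = 1)
    {c : L} (hc : c ^ n = 1) (a : A) :
    c • autBaseChange L ν (lagrangeResolvent ν n c a) = lagrangeResolvent ν n c a := by
  let term (i : ℕ) : L ⊗[K] A := (c ^ i) ⊗ₜ[K] ((ν ^ i) a)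
  have smul_term (i : ℕ) : c • autBaseChange L ν (term i) = term (i + 1) := by
    simp only [term, autBaseChange_tmul, TensorProduct.smul_tmul', smul_eq_mul, pow_succ',
      AlgEquiv.mul_apply]
  have term_add_period : term (n + 1) = term 1 := by
    simp only [term, pow_succ, hc, hν, one_mul, pow_zero]
  calc c • autBaseChange L ν (∑ i ∈ Finset.range n, term (i + 1))
      = ∑ i ∈ Finset.range n, term (i + 1 + 1) := by
        simp_rw [map_sum, Finset.smul_sum, smul_term]
    _ = ∑ i ∈ Finset.range n, term (i + 1) := by
        refine add_right_cancel (b := term 1) ?_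
        rw [← Finset.sum_range_succ' fun i => term (i + 1), Finset.sum_range_succ, term_add_period]

theorem exists_lagrangeResolvent_mul_eq (pb : PowerBasis K A) {ν : A ≃ₐ[K] A}
    (hν : ∀ m, 1 ≤ m → m < pb.dim → IsUnit ((ν ^ m) pb.gen - pb.gen))
    {n : ℕ} (hn : ν ^ n = 1) {c c' : L} (hc : c ^ n = 1) (hc' : c' ^ n = 1) (a a' b : A)
    (hunit : IsUnit (lagrangeResolvent ν n (c * c') b)) :
    ∃ l : L, lagrangeResolvent ν n c a * lagrangeResolvent ν n c' a' =
      (l ⊗ₜ 1) * lagrangeResolvent ν n (c * c') b := by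
  have hcc' : (c * c') ^ n = 1 := by rw [mul_pow, hc, hc', one_mul]
  have smul_product : (c * c') • autBaseChange L ν
      (lagrangeResolvent ν n c a * lagrangeResolvent ν n c' a') =
        lagrangeResolvent ν n c a * lagrangeResolvent ν n c' a' := by
    rw [map_mul, ← smul_mul_smul_comm, smul_autBaseChange_lagrangeResolvent hn hc,
      smul_autBaseChange_lagrangeResolvent hn hc']
  obtain ⟨t, ht, hmul⟩ := exists_apply_eq_self_and_eq_mul smul_product
    (smul_autBaseChange_lagrangeResolvent hn hcc' b) hunit
  obtain ⟨l, rfl⟩ := exists_eq_tmul_one_of_autBaseChange_eq_self pb hν ht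
  exact ⟨l, hmul⟩

end BaseChange

section AdjoinRootAutomorphism

variable {K : Type*} [CommRing K] {f C : K[X]} {ν : AdjoinRoot f ≃ₐ[K] AdjoinRoot f}

lemma pow_apply_root (hν : ν (AdjoinRoot.root f) = aeval (AdjoinRoot.root f) C) (m : ℕ) :
    (ν ^ m) (AdjoinRoot.root f) = AdjoinRoot.mk f (iterComp C m) := by
  rw [← AdjoinRoot.aeval_eq]
  induction m with
  | zero => simp [iterComp]
  | succ m ih => rw [pow_succ', AlgEquiv.mul_apply, ih, iterComp, aeval_comp, ← hν,
      aeval_algHom_apply]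

lemma pow_apply_root_sub_root (hν : ν (AdjoinRoot.root f) = aeval (AdjoinRoot.root f) C) (m : ℕ) :
    (ν ^ m) (AdjoinRoot.root f) - AdjoinRoot.root f = AdjoinRoot.mk f (iterComp C m - X) := by
  rw [pow_apply_root hν, map_sub, AdjoinRoot.mk_X]

lemma isUnit_mk_of_isCoprime {g : K[X]} (h : IsCoprime g f) : IsUnit (AdjoinRoot.mk f g) := by
  have h' := h.map (AdjoinRoot.mk f)
  rwa [AdjoinRoot.mk_self, isCoprime_zero_right] at h'

end AdjoinRootAutomorphism

namespace IsCyclicPolyWith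

variable {K : Type*} [Field K] {f C : K[X]} {ν : AdjoinRoot f ≃ₐ[K] AdjoinRoot f}

lemma isUnit_pow_apply_root_sub_root (hcyc : IsCyclicPolyWith f C)
    (hν : ν (AdjoinRoot.root f) = aeval (AdjoinRoot.root f) C) {m : ℕ} (h1 : 1 ≤ m)
    (hm : m < f.natDegree) : IsUnit ((ν ^ m) (AdjoinRoot.root f) - AdjoinRoot.root f) := by
  rw [pow_apply_root_sub_root hν]
  exact isUnit_mk_of_isCoprime (hcyc.2.2 m h1 hm)

lemma pow_natDegree_eq_one (hcyc : IsCyclicPolyWith f C)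
    (hν : ν (AdjoinRoot.root f) = aeval (AdjoinRoot.root f) C) : ν ^ f.natDegree = 1 := by
  have root_fixed : (ν ^ f.natDegree) (AdjoinRoot.root f) = AdjoinRoot.root f := by
    rw [← sub_eq_zero, pow_apply_root_sub_root hν, AdjoinRoot.mk_eq_zero]
    exact hcyc.2.1
  exact AlgEquiv.coe_toAlgHom_injective (AdjoinRoot.algHom_ext root_fixed)

end IsCyclicPolyWith

lemma val_apply_generator_pow_eq_one {G M : Type*} [Group G] [Monoid M] {g : G} {n : ℕ}
    (hg : g ^ n = 1) (χ : Subgroup.zpowers g →* Mˣ) :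
    (χ ⟨g, Subgroup.mem_zpowers g⟩ : M) ^ n = 1 := by
  have generator_pow : (⟨g, Subgroup.mem_zpowers g⟩ : Subgroup.zpowers g) ^ n = 1 := Subtype.ext hg
  rw [← Units.val_pow_eq_pow_val, ← map_pow, generator_pow, map_one, Units.val_one]

theorem stmt_10_general {K L : Type*} [Field K] [CommRing L] [Algebra K L]
    {f C : K[X]} {n : ℕ} (hn : f.natDegree = n) (hcyc : IsCyclicPolyWith f C)
    {ν : AdjoinRoot f ≃ₐ[K] AdjoinRoot f}
    (hν : ν (AdjoinRoot.root f) = aeval (AdjoinRoot.root f) C)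
    (χ χ' : Subgroup.zpowers ν →* Lˣ) (a a' b : AdjoinRoot f)
    (hunit : IsUnit
      (lagrangeResolvent ν n ((χ * χ') ⟨ν, Subgroup.mem_zpowers ν⟩ : L) b)) :
    ∃ l : L,
      lagrangeResolvent ν n (χ ⟨ν, Subgroup.mem_zpowers ν⟩ : L) a *
          lagrangeResolvent ν n (χ' ⟨ν, Subgroup.mem_zpowers ν⟩ : L) a' =
        (l ⊗ₜ[K] (1 : AdjoinRoot f)) *
          lagrangeResolvent ν n ((χ * χ') ⟨ν, Subgroup.mem_zpowers ν⟩ : L) b := by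
  subst hn
  rcases eq_or_ne f 0 with rfl | hf
  · exact ⟨0, by simp [lagrangeResolvent]⟩
  have hνn := hcyc.pow_natDegree_eq_one hν
  exact exists_lagrangeResolvent_mul_eq (AdjoinRoot.powerBasis hf)
    (fun _ => hcyc.isUnit_pow_apply_root_sub_root hν) hνn
    (val_apply_generator_pow_eq_one hνn χ) (val_apply_generator_pow_eq_one hνn χ') a a' b hunit

open scoped TensorProduct in
theorem stmt_10 {K L : Type*} [Field K] [Fintype K] [Field L] [Algebra K L]
    (f C : K[X]) (n : ℕ) (hn : f.natDegree = n) (hcyc : IsCyclicPolyWith f C)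
    (ν : AdjoinRoot f ≃ₐ[K] AdjoinRoot f)
    (hν : ν (AdjoinRoot.root f) = aeval (AdjoinRoot.root f) C)
    (hord : orderOf ν = n)
    (ρ : L) (hρ : IsPrimitiveRoot ρ n) (hL : Algebra.adjoin K {ρ} = ⊤)
    (χ χ' : ↥(Subgroup.zpowers ν) →* Lˣ) (a : AdjoinRoot f)
    (hunit : IsUnit (∑ i ∈ Finset.range n,
      ((((χ * χ') ⟨ν, Subgroup.mem_zpowers ν⟩ : Lˣ) : L) ^ (i + 1)) ⊗ₜ[K] ((ν ^ (i + 1)) a))) :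
    ∃ l : L,
      (∑ i ∈ Finset.range n,
          (((χ ⟨ν, Subgroup.mem_zpowers ν⟩ : Lˣ) : L) ^ (i + 1)) ⊗ₜ[K] ((ν ^ (i + 1)) a)) *
        (∑ i ∈ Finset.range n,
          (((χ' ⟨ν, Subgroup.mem_zpowers ν⟩ : Lˣ) : L) ^ (i + 1)) ⊗ₜ[K] ((ν ^ (i + 1)) a))
      = (l ⊗ₜ[K] (1 : AdjoinRoot f)) *
        ∑ i ∈ Finset.range n,
          ((((χ * χ') ⟨ν, Subgroup.mem_zpowers ν⟩ : Lˣ) : L) ^ (i + 1)) ⊗ₜ[K] ((ν ^ (i + 1)) a) := by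
  exact stmt_10_general hn hcyc hν χ χ' a a a hunit
end
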